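/- There exists a universal constant C > 0 such that for every c > 0 and R > 0 there exists a radial function q : ℝ⁶ → ℝ of class C³ whose third derivatives are locally Lipschitz, together with a radius R̃ > R and a finite set S of spheres centered at the origin off which q is smooth, satisfying: (P1) q(x) = |x|²/2 for |x| ≤ R; (P2) q(x) is constant for |x| ≥ R̃; (P3) |∇q(x)| ≤ C|x| and |Δq(x)| ≤ C for all x (with C independent of c and R); (P4) for all x ∈ ℝ⁶ and all v ∈ ℝ⁶, Σ_{i,j=1}^{6} ∂_{x_i x_j}q(x)·v_i v_j ≥ −c·|v|²; (P5) Δ²q(x) ≤ c·|x|^{−2} for every x ∉ S. -/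

import Mathlib

noncomputable section

/-- Six-dimensional Euclidean space. -/
abbrev E6 := EuclideanSpace ℝ (Fin 6)

/-- The (pointwise) Laplacian of a function on `ℝ⁶`, as the sum of second
directional derivatives along the coordinate directions. -/
def lap6 (f : E6 → ℝ) (x : E6) : ℝ :=
  ∑ i : Fin 6,
    fderiv ℝ (fun y => fderiv ℝ f y (EuclideanSpace.single i 1)) x
      (EuclideanSpace.single i 1)

/-!
A radial function `q x = G (‖x‖ ^ 2)` has Hessian `4 G'' x ⊗ x + 2 G' I`. All of its curvature
beyond the nonnegative part `2 G' I`, as well as `‖x‖ ^ 2 * Δ² q`, is a combination of the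
scale-invariant quantities `t ^ (k - 1) * G⁽ᵏ⁾ t` with `k ≥ 2`, where `t = ‖x‖ ^ 2`. It therefore
suffices to let `G'` decrease from `1 / 2` to `0` on a logarithmic scale,
`G' t = (1 - σ (δ log (t / R ^ 2))) / 2` with `σ` a smooth transition: each of these quantities is
then `O(δ)`, uniformly in `t` and `R`. The resulting weight is smooth on the whole space.
-/

section

open Set InnerProductSpace Laplacian Module Filter Topology
open scoped ContDiff

section LogScale

variable {φ : ℝ → ℝ} {δ A t : ℝ}

/-- The function `Pₖ` of the logarithmic variable `s = δ log (t / A)` for which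
`(d/dt)ᵏ φ(s) = t⁻ᵏ Pₖ(s)`. -/
def logScaleDeriv (φ : ℝ → ℝ) (δ : ℝ) : ℕ → ℝ → ℝ
  | 0 => φ
  | k + 1 => fun s ↦ δ * deriv (logScaleDeriv φ δ k) s - k * logScaleDeriv φ δ k s

theorem logScaleDeriv_succ (φ : ℝ → ℝ) (δ : ℝ) (k : ℕ) :
    logScaleDeriv φ δ (k + 1) =
      fun s ↦ δ * deriv (logScaleDeriv φ δ k) s - k * logScaleDeriv φ δ k s :=
  rfl

theorem contDiff_logScaleDeriv (hφ : ContDiff ℝ ∞ φ) (δ : ℝ) (k : ℕ) :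
    ContDiff ℝ ∞ (logScaleDeriv φ δ k) := by
  induction k with
  | zero => exact hφ
  | succ k ih =>
    exact (contDiff_const.mul (contDiff_infty_iff_deriv.1 ih).2).sub (contDiff_const.mul ih)

theorem hasDerivAt_const_mul_log_div (hA : A ≠ 0) (ht : t ≠ 0) :
    HasDerivAt (fun t ↦ δ * Real.log (t / A)) (δ / t) t := by
  refine ((((hasDerivAt_id t).div_const A).log (div_ne_zero ht hA)).const_mul δ).congr_deriv ?_
  rw [id_eq, div_div_div_cancel_right₀ hA, mul_one_div]

theorem iteratedDeriv_comp_const_mul_log_div (hφ : ContDiff ℝ ∞ φ) (δ : ℝ) (hA : A ≠ 0) (k : ℕ)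
    (ht : t ≠ 0) :
    iteratedDeriv k (fun t ↦ φ (δ * Real.log (t / A))) t =
      logScaleDeriv φ δ k (δ * Real.log (t / A)) / t ^ k := by
  induction k generalizing t with
  | zero => simp [logScaleDeriv]
  | succ k ih =>
    have hP : HasDerivAt (logScaleDeriv φ δ k)
        (deriv (logScaleDeriv φ δ k) (δ * Real.log (t / A))) (δ * Real.log (t / A)) :=
      ((contDiff_logScaleDeriv hφ δ k).differentiable (by simp)).differentiableAt.hasDerivAt
    have hquot := (hP.comp t (hasDerivAt_const_mul_log_div hA ht)).div
      (hasDerivAt_pow k t) (pow_ne_zero k ht)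
    have heq : iteratedDeriv k (fun t ↦ φ (δ * Real.log (t / A))) =ᶠ[𝓝 t]
        fun t ↦ logScaleDeriv φ δ k (δ * Real.log (t / A)) / t ^ k :=
      (eventually_ne_nhds ht).mono fun y hy ↦ ih hy
    rw [iteratedDeriv_succ, heq.deriv_eq, logScaleDeriv_succ]
    refine hquot.deriv.trans ?_
    have hpow : (k : ℝ) * t ^ (k - 1) = k * t ^ k / t := by
      rcases k.eq_zero_or_pos with rfl | hk
      · simp
      · rw [← mul_pow_sub_one hk.ne' t]
        field_simp
    rw [hpow, Function.comp_apply]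
    field_simp
    ring

/-- Only the derivatives of `φ` of positive order contribute, each with a factor `δ`. -/
theorem exists_abs_iteratedDeriv_logScaleDeriv_le (hφ : ContDiff ℝ ∞ φ)
    (hb : ∀ j, ∃ M, ∀ s, |iteratedDeriv (j + 1) φ s| ≤ M) (k j : ℕ) :
    ∃ K, ∀ δ ∈ Icc (0 : ℝ) 1, ∀ s, |iteratedDeriv j (logScaleDeriv φ δ (k + 1)) s| ≤ K * δ := by
  induction k generalizing j with
  | zero =>
    obtain ⟨M, hM⟩ := hb j
    refine ⟨M, fun δ hδ s ↦ ?_⟩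
    have hfirst : logScaleDeriv φ δ 1 = fun s ↦ δ * deriv φ s := by
      simp [logScaleDeriv]
    rw [hfirst, iteratedDeriv_const_mul_field, ← iteratedDeriv_succ', abs_mul,
      abs_of_nonneg hδ.1, mul_comm]
    exact mul_le_mul_of_nonneg_right (hM s) hδ.1
  | succ k ih =>
    obtain ⟨K, hK⟩ := ih j
    obtain ⟨K', hK'⟩ := ih (j + 1)
    refine ⟨K' + (k + 1) * K, fun δ hδ s ↦ ?_⟩
    set P := logScaleDeriv φ δ (k + 1)
    have hsmooth : ContDiff ℝ ∞ P := contDiff_logScaleDeriv hφ δ (k + 1)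
    have hrec : iteratedDeriv j (logScaleDeriv φ δ (k + 2)) s =
        δ * iteratedDeriv (j + 1) P s - (k + 1) * iteratedDeriv j P s := by
      have hderiv : ContDiff ℝ ∞ (deriv P) := (contDiff_infty_iff_deriv.1 hsmooth).2
      rw [logScaleDeriv_succ, iteratedDeriv_fun_sub, iteratedDeriv_const_mul_field,
        iteratedDeriv_const_mul_field, ← iteratedDeriv_succ', Nat.cast_succ]
      · exact (contDiff_const.mul hderiv).contDiffAt.of_le (mod_cast le_top)
      · exact (contDiff_const.mul hsmooth).contDiffAt.of_le (mod_cast le_top)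
    calc |iteratedDeriv j (logScaleDeriv φ δ (k + 2)) s|
        ≤ δ * |iteratedDeriv (j + 1) P s| + (k + 1) * |iteratedDeriv j P s| := by
          rw [hrec]
          refine (abs_sub _ _).trans_eq ?_
          rw [abs_mul, abs_mul, abs_of_nonneg hδ.1,
            abs_of_nonneg (by positivity : (0 : ℝ) ≤ k + 1)]
      _ ≤ 1 * (K' * δ) + (k + 1) * (K * δ) := by
          gcongr
          exacts [hδ.2, hK' δ hδ s, hK δ hδ s]
      _ = (K' + (k + 1) * K) * δ := by ring

theorem exists_abs_pow_mul_iteratedDeriv_comp_log_le (hφ : ContDiff ℝ ∞ φ)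
    (hb : ∀ j, ∃ M, ∀ s, |iteratedDeriv (j + 1) φ s| ≤ M) (k : ℕ) :
    ∃ K, ∀ δ ∈ Icc (0 : ℝ) 1, ∀ A ≠ 0, ∀ t,
      |t ^ (k + 1) * iteratedDeriv (k + 1) (fun t ↦ φ (δ * Real.log (t / A))) t| ≤ K * δ := by
  obtain ⟨K, hK⟩ := exists_abs_iteratedDeriv_logScaleDeriv_le hφ hb k 0
  simp only [iteratedDeriv_zero] at hK
  refine ⟨K, fun δ hδ A hA t ↦ ?_⟩
  rcases eq_or_ne t 0 with rfl | ht
  · simpa using (abs_nonneg _).trans (hK δ hδ 0)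
  · rw [iteratedDeriv_comp_const_mul_log_div hφ δ hA _ ht, mul_div_cancel₀ _ (pow_ne_zero _ ht)]
    exact hK δ hδ _

end LogScale

section LogCutoff

variable {δ A t : ℝ}

theorem hasCompactSupport_deriv_smoothTransition :
    HasCompactSupport (deriv Real.smoothTransition) := by
  refine HasCompactSupport.intro (isCompact_Icc (a := 0) (b := 1)) fun x hx ↦ ?_
  rcases lt_or_ge x 0 with h0 | h0
  · have hmin : IsLocalMin Real.smoothTransition x := Eventually.of_forall fun y ↦
      (Real.smoothTransition.zero_of_nonpos h0.le).trans_le (Real.smoothTransition.nonneg y)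
    exact hmin.deriv_eq_zero
  · have h1 : 1 ≤ x := le_of_not_ge fun h1 ↦ hx ⟨h0, h1⟩
    have hmax : IsLocalMax Real.smoothTransition x := Eventually.of_forall fun y ↦
      (Real.smoothTransition.le_one y).trans_eq (Real.smoothTransition.one_of_one_le h1).symm
    exact hmax.deriv_eq_zero

theorem exists_abs_iteratedDeriv_succ_smoothTransition_le (j : ℕ) :
    ∃ M, ∀ s, |iteratedDeriv (j + 1) Real.smoothTransition s| ≤ M := by
  have hsmooth : ContDiff ℝ ∞ (deriv Real.smoothTransition) :=
    (contDiff_infty_iff_deriv.1 Real.smoothTransition.contDiff).2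
  obtain ⟨M, hM⟩ := (hasCompactSupport_deriv_smoothTransition.iteratedFDeriv (𝕜 := ℝ) j
    ).exists_bound_of_continuous (hsmooth.continuous_iteratedFDeriv (mod_cast le_top))
  refine ⟨M, fun s ↦ ?_⟩
  rw [iteratedDeriv_succ', ← Real.norm_eq_abs, ← norm_iteratedFDeriv_eq_norm_iteratedDeriv]
  exact hM s

/-- A smooth cutoff equal to `1` for `|t| ≤ A` that decreases to `0` at `t = A * exp (1 / δ)`, so
slowly that `t ^ k` times its `k`-th derivative is `O(δ)`. Since `Real.log` is even with
`Real.log 0 = 0`, the formula needs no case distinction for `t ≤ 0`. -/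
def logCutoff (δ A t : ℝ) : ℝ :=
  1 - Real.smoothTransition (δ * Real.log (t / A))

theorem logCutoff_mem_Icc (δ A t : ℝ) : logCutoff δ A t ∈ Icc 0 1 :=
  ⟨sub_nonneg.2 (Real.smoothTransition.le_one _), sub_le_self _ (Real.smoothTransition.nonneg _)⟩

theorem logCutoff_of_abs_le (hδ : 0 ≤ δ) (hA : 0 < A) (ht : |t| ≤ A) : logCutoff δ A t = 1 := by
  have hlog : Real.log (t / A) ≤ 0 := by
    rw [← Real.log_abs, abs_div, abs_of_pos hA]
    exact Real.log_nonpos (by positivity) ((div_le_one hA).2 ht)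
  rw [logCutoff, Real.smoothTransition.zero_of_nonpos (mul_nonpos_of_nonneg_of_nonpos hδ hlog),
    sub_zero]

theorem logCutoff_of_mul_exp_le (hδ : 0 < δ) (hA : 0 < A) (ht : A * Real.exp (1 / δ) ≤ t) :
    logCutoff δ A t = 0 := by
  have ht0 : 0 < t := lt_of_lt_of_le (by positivity) ht
  have hlog : 1 / δ ≤ Real.log (t / A) := by
    rwa [Real.le_log_iff_exp_le (by positivity), le_div_iff₀' hA]
  rw [logCutoff, Real.smoothTransition.one_of_one_le ((div_le_iff₀' hδ).1 hlog), sub_self]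

theorem contDiff_logCutoff (hδ : 0 ≤ δ) (hA : 0 < A) : ContDiff ℝ ∞ (logCutoff δ A) := by
  refine contDiff_iff_contDiffAt.2 fun t ↦ ?_
  rcases lt_or_ge |t| A with ht | ht
  · have hone : logCutoff δ A =ᶠ[𝓝 t] fun _ ↦ 1 :=
      (continuous_abs.continuousAt.eventually_lt_const ht).mono fun y hy ↦
        logCutoff_of_abs_le hδ hA hy.le
    exact contDiffAt_const.congr_of_eventuallyEq hone
  · have ht0 : t / A ≠ 0 := div_ne_zero (abs_pos.1 (hA.trans_le ht)) hA.ne'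
    exact contDiffAt_const.sub (Real.smoothTransition.contDiffAt.comp t
      (contDiffAt_const.mul ((contDiffAt_id.div_const A).log ht0)))

theorem exists_abs_pow_mul_iteratedDeriv_logCutoff_le (k : ℕ) :
    ∃ K, ∀ δ ∈ Icc (0 : ℝ) 1, ∀ A ≠ 0, ∀ t,
      |t ^ (k + 1) * iteratedDeriv (k + 1) (logCutoff δ A) t| ≤ K * δ := by
  obtain ⟨K, hK⟩ := exists_abs_pow_mul_iteratedDeriv_comp_log_le Real.smoothTransition.contDiff
    exists_abs_iteratedDeriv_succ_smoothTransition_le k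
  refine ⟨K, fun δ hδ A hA t ↦ ?_⟩
  unfold logCutoff
  rw [iteratedDeriv_const_sub k.succ_pos, iteratedDeriv_neg, mul_neg, abs_neg]
  exact hK δ hδ A hA t

end LogCutoff

section LogProfile

variable {δ A t : ℝ}

/-- The profile `G` of the weight `x ↦ G (‖x‖ ^ 2)`: it is `t / 2` on `[0, A]` and saturates at
`t = A * exp (1 / δ)`. -/
def logProfile (δ A t : ℝ) : ℝ :=
  ∫ s in 0..t, logCutoff δ A s / 2

theorem deriv_logProfile (hδ : 0 ≤ δ) (hA : 0 < A) :
    deriv (logProfile δ A) = fun t ↦ logCutoff δ A t / 2 :=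
  funext fun t ↦ ((contDiff_logCutoff hδ hA).continuous.div_const 2).deriv_integral _ 0 t

theorem contDiff_logProfile (hδ : 0 ≤ δ) (hA : 0 < A) : ContDiff ℝ ∞ (logProfile δ A) := by
  have hcont := (contDiff_logCutoff hδ hA).continuous.div_const 2
  refine contDiff_infty_iff_deriv.2
    ⟨intervalIntegral.differentiable_integral_of_continuous hcont, ?_⟩
  rw [deriv_logProfile hδ hA]
  exact (contDiff_logCutoff hδ hA).div_const 2

theorem deriv_logProfile_mem_Icc (hδ : 0 ≤ δ) (hA : 0 < A) (t : ℝ) :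
    deriv (logProfile δ A) t ∈ Icc 0 (1 / 2) := by
  rw [deriv_logProfile hδ hA]
  have h := logCutoff_mem_Icc δ A t
  exact ⟨div_nonneg h.1 zero_le_two, div_le_div_of_nonneg_right h.2 zero_le_two⟩

theorem iteratedDeriv_succ_logProfile (hδ : 0 ≤ δ) (hA : 0 < A) (k : ℕ) (t : ℝ) :
    iteratedDeriv (k + 1) (logProfile δ A) t = iteratedDeriv k (logCutoff δ A) t / 2 := by
  rw [iteratedDeriv_succ', deriv_logProfile hδ hA, iteratedDeriv_div_const]

theorem iteratedDeriv_two_logProfile_zero (hδ : 0 ≤ δ) (hA : 0 < A) :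
    iteratedDeriv 2 (logProfile δ A) 0 = 0 := by
  have hmax : IsLocalMax (logCutoff δ A) 0 := Eventually.of_forall fun t ↦
    (logCutoff_mem_Icc δ A t).2.trans_eq (logCutoff_of_abs_le hδ hA (by simpa using hA.le)).symm
  rw [iteratedDeriv_succ_logProfile hδ hA, iteratedDeriv_one, hmax.deriv_eq_zero, zero_div]

theorem logProfile_of_le (hδ : 0 ≤ δ) (hA : 0 < A) (ht : 0 ≤ t) (htA : t ≤ A) :
    logProfile δ A t = t / 2 := by
  have hone : EqOn (fun s ↦ logCutoff δ A s / 2) (fun _ ↦ 1 / 2) (uIcc 0 t) := fun s hs ↦ by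
    rw [uIcc_of_le ht] at hs
    simp only [logCutoff_of_abs_le hδ hA ((abs_of_nonneg hs.1).trans_le (hs.2.trans htA))]
  rw [logProfile, intervalIntegral.integral_congr hone, intervalIntegral.integral_const,
    smul_eq_mul, sub_zero, mul_one_div]

theorem logProfile_of_mul_exp_le (hδ : 0 < δ) (hA : 0 < A) (ht : A * Real.exp (1 / δ) ≤ t) :
    logProfile δ A t = logProfile δ A (A * Real.exp (1 / δ)) := by
  have hint (a b : ℝ) := ((contDiff_logCutoff hδ.le hA).continuous.div_const 2).intervalIntegrable
    (μ := MeasureTheory.volume) a b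
  have hzero : EqOn (fun s ↦ logCutoff δ A s / 2) (fun _ ↦ 0)
      (uIcc (A * Real.exp (1 / δ)) t) := fun s hs ↦ by
    rw [uIcc_of_le ht] at hs
    simp only [logCutoff_of_mul_exp_le hδ hA hs.1, zero_div]
  rw [← sub_eq_zero, logProfile, logProfile,
    intervalIntegral.integral_interval_sub_left (hint _ _) (hint _ _),
    intervalIntegral.integral_congr hzero, intervalIntegral.integral_zero]

theorem exists_abs_pow_mul_iteratedDeriv_logProfile_le (N : ℕ) {ε : ℝ} (hε : 0 < ε) :
    ∃ δ > 0, ∀ A > 0, ∀ k < N, ∀ t,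
      |t ^ (k + 1) * iteratedDeriv (k + 2) (logProfile δ A) t| ≤ ε := by
  choose K hK using exists_abs_pow_mul_iteratedDeriv_logCutoff_le
  set M := 1 + ∑ k ∈ Finset.range N, |K k|
  have hMpos : 0 < M := by positivity
  have hKM : ∀ k < N, K k ≤ M := fun k hk ↦ by
    have hle := Finset.single_le_sum (f := fun k ↦ |K k|) (fun _ _ ↦ abs_nonneg _)
      (Finset.mem_range.2 hk)
    linarith [le_abs_self (K k)]
  have hδ : 0 < min 1 (ε / M) := by positivity
  refine ⟨min 1 (ε / M), hδ, fun A hA k hk t ↦ ?_⟩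
  rw [iteratedDeriv_succ_logProfile hδ.le hA, mul_div_assoc']
  calc |t ^ (k + 1) * iteratedDeriv (k + 1) (logCutoff (min 1 (ε / M)) A) t / 2|
      ≤ |t ^ (k + 1) * iteratedDeriv (k + 1) (logCutoff (min 1 (ε / M)) A) t| := by
        rw [abs_div, abs_two]
        exact half_le_self (abs_nonneg _)
    _ ≤ K k * min 1 (ε / M) := hK k _ ⟨hδ.le, min_le_left _ _⟩ A hA.ne' t
    _ ≤ M * (ε / M) := mul_le_mul (hKM k hk) (min_le_right _ _) hδ.le hMpos.le
    _ = ε := mul_div_cancel₀ ε hMpos.ne'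

end LogProfile

section Radial

variable {E : Type*} [NormedAddCommGroup E] [InnerProductSpace ℝ E] {G : ℝ → ℝ} {x : E} {ε M : ℝ}

theorem hasFDerivAt_comp_norm_sq {G' : ℝ} (hG : HasDerivAt G G' (‖x‖ ^ 2)) :
    HasFDerivAt (fun y : E ↦ G (‖y‖ ^ 2)) ((2 * G') • innerSL ℝ x) x :=
  (hG.comp_hasFDerivAt x (hasStrictFDerivAt_norm_sq x).hasFDerivAt).congr_fderiv (by module)

theorem gradient_comp_norm_sq [CompleteSpace E] (hG : DifferentiableAt ℝ G (‖x‖ ^ 2)) :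
    gradient (fun y : E ↦ G (‖y‖ ^ 2)) x = (2 * deriv G (‖x‖ ^ 2)) • x := by
  refine HasGradientAt.gradient (hasGradientAt_iff_hasFDerivAt.2 ?_)
  exact (hasFDerivAt_comp_norm_sq hG.hasDerivAt).congr_fderiv (by ext v; simp)

theorem norm_gradient_comp_norm_sq_le [CompleteSpace E] (hG : DifferentiableAt ℝ G (‖x‖ ^ 2))
    (h : |deriv G (‖x‖ ^ 2)| ≤ M) : ‖gradient (fun y : E ↦ G (‖y‖ ^ 2)) x‖ ≤ 2 * M * ‖x‖ := by
  rw [gradient_comp_norm_sq hG, norm_smul, Real.norm_eq_abs, abs_mul, abs_two]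
  gcongr

theorem fderiv_fderiv_comp_norm_sq (hG : ContDiff ℝ 2 G) (x v w : E) :
    fderiv ℝ (fderiv ℝ fun y : E ↦ G (‖y‖ ^ 2)) x v w =
      4 * iteratedDeriv 2 G (‖x‖ ^ 2) * (inner ℝ x v * inner ℝ x w) +
        2 * deriv G (‖x‖ ^ 2) * inner ℝ v w := by
  have hfirst : fderiv ℝ (fun y : E ↦ G (‖y‖ ^ 2)) =
      fun y ↦ (2 * deriv G (‖y‖ ^ 2)) • innerSL ℝ y := funext fun y ↦
    (hasFDerivAt_comp_norm_sq
      (hG.differentiable (by simp)).differentiableAt.hasDerivAt).fderiv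
  have hderiv : HasDerivAt (deriv G) (iteratedDeriv 2 G (‖x‖ ^ 2)) (‖x‖ ^ 2) := by
    rw [iteratedDeriv_succ, iteratedDeriv_one]
    exact (hG.differentiable_deriv_two).differentiableAt.hasDerivAt
  have hsecond := ((hasFDerivAt_comp_norm_sq hderiv).const_mul 2).fun_smul
    (innerSL ℝ (E := E)).hasFDerivAt
  rw [hfirst, hsecond.fderiv]
  simp only [add_apply, smul_apply, ContinuousLinearMap.smulRight_apply, innerSL_apply_apply ℝ,
    smul_eq_mul]
  ring

theorem neg_le_fderiv_fderiv_comp_norm_sq (hG : ContDiff ℝ 2 G)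
    (h₁ : 0 ≤ deriv G (‖x‖ ^ 2)) (h₂ : |‖x‖ ^ 2 * iteratedDeriv 2 G (‖x‖ ^ 2)| ≤ ε) (v : E) :
    -(4 * ε * ‖v‖ ^ 2) ≤ fderiv ℝ (fderiv ℝ fun y : E ↦ G (‖y‖ ^ 2)) x v v := by
  have hcs : (inner ℝ x v : ℝ) ^ 2 ≤ ‖x‖ ^ 2 * ‖v‖ ^ 2 := by
    rw [← mul_pow, ← sq_abs]
    gcongr
    exact abs_real_inner_le_norm x v
  have hradial : |iteratedDeriv 2 G (‖x‖ ^ 2) * inner ℝ x v ^ 2| ≤ ε * ‖v‖ ^ 2 :=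
    calc |iteratedDeriv 2 G (‖x‖ ^ 2) * inner ℝ x v ^ 2|
        = |iteratedDeriv 2 G (‖x‖ ^ 2)| * inner ℝ x v ^ 2 := by
          rw [abs_mul, abs_of_nonneg (sq_nonneg (inner ℝ x v))]
      _ ≤ |iteratedDeriv 2 G (‖x‖ ^ 2)| * (‖x‖ ^ 2 * ‖v‖ ^ 2) := by gcongr
      _ = |‖x‖ ^ 2 * iteratedDeriv 2 G (‖x‖ ^ 2)| * ‖v‖ ^ 2 := by
          rw [abs_mul, abs_of_nonneg (sq_nonneg ‖x‖)]
          ring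
      _ ≤ ε * ‖v‖ ^ 2 := by gcongr
  have htangential : 0 ≤ deriv G (‖x‖ ^ 2) * ‖v‖ ^ 2 := by positivity
  rw [fderiv_fderiv_comp_norm_sq hG, real_inner_self_eq_norm_sq]
  linarith [neg_le_of_abs_le hradial]

variable [FiniteDimensional ℝ E]

theorem laplacian_comp_norm_sq (hG : ContDiff ℝ 2 G) :
    Δ (fun y : E ↦ G (‖y‖ ^ 2)) = fun x ↦
      4 * (‖x‖ ^ 2 * iteratedDeriv 2 G (‖x‖ ^ 2) + finrank ℝ E / 2 * deriv G (‖x‖ ^ 2)) := by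
  ext x
  simp only [laplacian_eq_iteratedFDeriv_stdOrthonormalBasis, iteratedFDeriv_two_apply,
    Matrix.cons_val_zero, Matrix.cons_val_one, fderiv_fderiv_comp_norm_sq hG, ← pow_two,
    Finset.sum_add_distrib, ← Finset.mul_sum, OrthonormalBasis.sum_sq_inner_left,
    real_inner_self_eq_norm_sq, OrthonormalBasis.norm_eq_one, one_pow, Finset.sum_const,
    Finset.card_univ, Fintype.card_fin, nsmul_eq_mul, mul_one]
  ring

theorem abs_laplacian_comp_norm_sq_le (hG : ContDiff ℝ 2 G) (h₁ : |deriv G (‖x‖ ^ 2)| ≤ M)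
    (h₂ : |‖x‖ ^ 2 * iteratedDeriv 2 G (‖x‖ ^ 2)| ≤ ε) :
    |Δ (fun y : E ↦ G (‖y‖ ^ 2)) x| ≤ 4 * ε + 2 * finrank ℝ E * M := by
  rw [laplacian_comp_norm_sq hG]
  calc |4 * (‖x‖ ^ 2 * iteratedDeriv 2 G (‖x‖ ^ 2) + finrank ℝ E / 2 * deriv G (‖x‖ ^ 2))|
      ≤ 4 * (|‖x‖ ^ 2 * iteratedDeriv 2 G (‖x‖ ^ 2)| +
          finrank ℝ E / 2 * |deriv G (‖x‖ ^ 2)|) := by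
        rw [abs_mul, abs_of_pos (four_pos : (0 : ℝ) < 4)]
        gcongr
        refine (abs_add_le _ _).trans_eq ?_
        rw [abs_mul (_ / 2), abs_of_nonneg (by positivity : (0 : ℝ) ≤ finrank ℝ E / 2)]
    _ ≤ 4 * (ε + finrank ℝ E / 2 * M) := by gcongr
    _ = 4 * ε + 2 * finrank ℝ E * M := by ring

theorem deriv_mul_iteratedDeriv_succ_add {k : ℕ} (hG : ContDiff ℝ (k + 2) G) (a : ℝ) :
    deriv (fun t ↦ t * iteratedDeriv (k + 1) G t + a * iteratedDeriv k G t) =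
      fun t ↦ t * iteratedDeriv (k + 2) G t + (a + 1) * iteratedDeriv (k + 1) G t := by
  funext t
  have h₀ : HasDerivAt (iteratedDeriv k G) (iteratedDeriv (k + 1) G t) t := by
    rw [iteratedDeriv_succ]
    exact (hG.differentiable_iteratedDeriv k (mod_cast (by omega))).differentiableAt.hasDerivAt
  have h₁ : HasDerivAt (iteratedDeriv (k + 1) G) (iteratedDeriv (k + 2) G t) t := by
    rw [iteratedDeriv_succ (n := k + 1)]
    exact (hG.differentiable_iteratedDeriv (k + 1)
      (mod_cast (by omega))).differentiableAt.hasDerivAt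
  refine (((hasDerivAt_id t).mul h₁).add (h₀.const_mul a)).deriv.trans ?_
  simp only [id_eq]
  ring

theorem laplacian_laplacian_comp_norm_sq (hG : ContDiff ℝ 4 G) (x : E) :
    Δ (Δ fun y : E ↦ G (‖y‖ ^ 2)) x =
      16 * (‖x‖ ^ 2) ^ 2 * iteratedDeriv 4 G (‖x‖ ^ 2) +
        16 * (finrank ℝ E + 2) * ‖x‖ ^ 2 * iteratedDeriv 3 G (‖x‖ ^ 2) +
          4 * finrank ℝ E * (finrank ℝ E + 2) * iteratedDeriv 2 G (‖x‖ ^ 2) := by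
  set n : ℝ := (finrank ℝ E : ℝ) with hn
  set H : ℝ → ℝ := fun t ↦ 4 * (t * iteratedDeriv 2 G t + n / 2 * iteratedDeriv 1 G t) with hH
  have hΔ : Δ (fun y : E ↦ G (‖y‖ ^ 2)) = fun y ↦ H (‖y‖ ^ 2) := by
    rw [laplacian_comp_norm_sq (hG.of_le (by norm_num)), hH, iteratedDeriv_one]
  have hHsmooth : ContDiff ℝ 2 H := by
    have h₂ : ContDiff ℝ 2 (iteratedDeriv 2 G) := by
      rw [iteratedDeriv_eq_iterate]
      exact ContDiff.iterate_deriv' 2 2 hG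
    have h₁ : ContDiff ℝ 2 (iteratedDeriv 1 G) := by
      rw [iteratedDeriv_eq_iterate]
      exact ContDiff.iterate_deriv' 2 1 (hG.of_le (by norm_num))
    exact contDiff_const.mul ((contDiff_id.mul h₂).add (contDiff_const.mul h₁))
  have hH₁ : deriv H =
      fun t ↦ 4 * (t * iteratedDeriv 3 G t + (n / 2 + 1) * iteratedDeriv 2 G t) := by
    rw [hH, deriv_const_mul_field',
      deriv_mul_iteratedDeriv_succ_add (k := 1) (hG.of_le (by norm_num))]
  have hH₂ : iteratedDeriv 2 H =
      fun t ↦ 4 * (t * iteratedDeriv 4 G t + (n / 2 + 1 + 1) * iteratedDeriv 3 G t) := by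
    rw [iteratedDeriv_succ, iteratedDeriv_one, hH₁, deriv_const_mul_field',
      deriv_mul_iteratedDeriv_succ_add (k := 2) (hG.of_le (by norm_num))]
  rw [hΔ, laplacian_comp_norm_sq hHsmooth, hH₁, hH₂, ← hn]
  ring

theorem abs_laplacian_laplacian_comp_norm_sq_le (hG : ContDiff ℝ 4 G) (hx : x ≠ 0)
    (h : ∀ k < 3, |(‖x‖ ^ 2) ^ (k + 1) * iteratedDeriv (k + 2) G (‖x‖ ^ 2)| ≤ ε) :
    |Δ (Δ fun y : E ↦ G (‖y‖ ^ 2)) x| ≤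
      4 * (finrank ℝ E ^ 2 + 6 * finrank ℝ E + 12) * ε / ‖x‖ ^ 2 := by
  have hx2 : 0 < ‖x‖ ^ 2 := by positivity
  rw [le_div_iff₀ hx2, laplacian_laplacian_comp_norm_sq hG]
  set n : ℝ := (finrank ℝ E : ℝ)
  set t := ‖x‖ ^ 2
  have : 0 ≤ n := Nat.cast_nonneg _
  calc |16 * t ^ 2 * iteratedDeriv 4 G t + 16 * (n + 2) * t * iteratedDeriv 3 G t +
          4 * n * (n + 2) * iteratedDeriv 2 G t| * t
      = |(16 * t ^ 2 * iteratedDeriv 4 G t + 16 * (n + 2) * t * iteratedDeriv 3 G t +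
          4 * n * (n + 2) * iteratedDeriv 2 G t) * t| := by rw [abs_mul, abs_of_pos hx2]
    _ = |16 * (t ^ 3 * iteratedDeriv 4 G t) + 16 * (n + 2) * (t ^ 2 * iteratedDeriv 3 G t) +
          4 * n * (n + 2) * (t ^ 1 * iteratedDeriv 2 G t)| := by ring_nf
    _ ≤ 16 * |t ^ 3 * iteratedDeriv 4 G t| + 16 * (n + 2) * |t ^ 2 * iteratedDeriv 3 G t| +
          4 * n * (n + 2) * |t ^ 1 * iteratedDeriv 2 G t| := by
        refine (abs_add_three _ _ _).trans_eq ?_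
        rw [abs_mul 16, abs_mul (16 * (n + 2)), abs_mul (4 * n * (n + 2)),
          abs_of_nonneg (by positivity : (0 : ℝ) ≤ 16),
          abs_of_nonneg (by positivity : 0 ≤ 16 * (n + 2)),
          abs_of_nonneg (by positivity : 0 ≤ 4 * n * (n + 2))]
    _ ≤ 16 * ε + 16 * (n + 2) * ε + 4 * n * (n + 2) * ε := by
        gcongr
        exacts [h 2 (by norm_num), h 1 (by norm_num), h 0 (by norm_num)]
    _ = 4 * (n ^ 2 + 6 * n + 12) * ε := by ring

end Radial

section Coordinates

theorem contDiff_laplacian {E : Type*} [NormedAddCommGroup E] [InnerProductSpace ℝ E]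
    [FiniteDimensional ℝ E] {f : E → ℝ} (hf : ContDiff ℝ ∞ f) : ContDiff ℝ ∞ (Δ f) := by
  have hf₂ : ContDiff ℝ ∞ (fderiv ℝ (fderiv ℝ f)) :=
    (hf.fderiv_right (m := ∞) (by simp)).fderiv_right (by simp)
  simp only [laplacian_eq_iteratedFDeriv_stdOrthonormalBasis, iteratedFDeriv_two_apply]
  exact ContDiff.sum fun i _ ↦ (hf₂.clm_apply contDiff_const).clm_apply contDiff_const

theorem fderiv_fderiv_apply {E F : Type*} [NormedAddCommGroup E] [NormedSpace ℝ E]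
    [NormedAddCommGroup F] [NormedSpace ℝ F] {f : E → F} (hf : ContDiff ℝ 2 f) (x v w : E) :
    fderiv ℝ (fun y ↦ fderiv ℝ f y w) x v = fderiv ℝ (fderiv ℝ f) x v w := by
  have hdiff : Differentiable ℝ (fderiv ℝ f) :=
    (hf.fderiv_right (m := 1) (by norm_num)).differentiable (by simp)
  simp [fderiv_clm_apply hdiff.differentiableAt (differentiableAt_const w)]

theorem sum_sum_fderiv_fderiv_single {ι : Type*} [Fintype ι] [DecidableEq ι]
    {f : EuclideanSpace ℝ ι → ℝ} (hf : ContDiff ℝ 2 f) (x v : EuclideanSpace ℝ ι) :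
    ∑ i, ∑ j, fderiv ℝ (fun y ↦ fderiv ℝ f y (EuclideanSpace.single j 1)) x
      (EuclideanSpace.single i 1) * v i * v j = fderiv ℝ (fderiv ℝ f) x v v := by
  simp only [fderiv_fderiv_apply hf]
  have hv : ∑ i, v i • EuclideanSpace.single i (1 : ℝ) = v := by
    simpa using (EuclideanSpace.basisFun ι ℝ).sum_repr v
  set B := fderiv ℝ (fderiv ℝ f) x
  calc ∑ i, ∑ j, B (EuclideanSpace.single i 1) (EuclideanSpace.single j 1) * v i * v j
      = ∑ i, ∑ j, v j * (v i * B (EuclideanSpace.single i 1) (EuclideanSpace.single j 1)) :=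
        Finset.sum_congr rfl fun i _ ↦ Finset.sum_congr rfl fun j _ ↦ by ring
    _ = B (∑ i, v i • EuclideanSpace.single i 1) (∑ j, v j • EuclideanSpace.single j 1) := by
        rw [map_sum B, sum_apply]
        simp only [map_sum, map_smul, smul_apply, smul_eq_mul]
    _ = B v v := by rw [hv]

theorem lap6_eq_laplacian {f : E6 → ℝ} (hf : ContDiff ℝ 2 f) : lap6 f = Δ f := by
  ext x
  simp [lap6, fderiv_fderiv_apply hf, iteratedFDeriv_two_apply,
    laplacian_eq_iteratedFDeriv_orthonormalBasis f (EuclideanSpace.basisFun (Fin 6) ℝ)]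

theorem exists_lipschitzOnWith_iteratedFDeriv {E F : Type*} [NormedAddCommGroup E]
    [NormedSpace ℝ E] [NormedAddCommGroup F] [NormedSpace ℝ F] {f : E → F} {n : ℕ}
    (hf : ContDiff ℝ (n + 1) f) {K : Set E} (hK : IsCompact K) :
    ∃ L, LipschitzOnWith L (iteratedFDeriv ℝ n f) K := by
  have hsmooth : ContDiff ℝ 1 (iteratedFDeriv ℝ n f) := hf.iteratedFDeriv_right (by rw [add_comm])
  exact hsmooth.locallyLipschitz.locallyLipschitzOn.exists_lipschitzOnWith_of_compact hK

end Coordinates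

theorem stmt7_general (E : Type*) [NormedAddCommGroup E] [InnerProductSpace ℝ E]
    [FiniteDimensional ℝ E] :
    ∃ C > (0 : ℝ), ∀ c > (0 : ℝ), ∀ R > (0 : ℝ), ∃ (q : E → ℝ) (R' : ℝ),
      R < R' ∧
      (∃ q₀ : ℝ → ℝ, ∀ x, q x = q₀ ‖x‖) ∧
      ContDiff ℝ ∞ q ∧
      (∀ x, ‖x‖ ≤ R → q x = ‖x‖ ^ 2 / 2) ∧
      (∃ k₀ : ℝ, ∀ x, R' ≤ ‖x‖ → q x = k₀) ∧
      (∀ x, ‖gradient q x‖ ≤ C * ‖x‖ ∧ |Δ q x| ≤ C) ∧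
      (∀ x v, -(c * ‖v‖ ^ 2) ≤ fderiv ℝ (fderiv ℝ q) x v v) ∧
      ∀ x, |Δ (Δ q) x| ≤ c / ‖x‖ ^ 2 := by
  refine ⟨finrank ℝ E + 4, by positivity, fun c hc R hR ↦ ?_⟩
  have hdim : (0 : ℝ) ≤ finrank ℝ E := Nat.cast_nonneg _
  set K : ℝ := 4 * (finrank ℝ E ^ 2 + 6 * finrank ℝ E + 12)
  have hK : 4 ≤ K := by nlinarith [hdim]
  set ε := min 1 (c / K)
  have hε : 0 < ε := by positivity
  have hεc : K * ε ≤ c := (le_div_iff₀' (by positivity)).1 (min_le_right _ _)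
  obtain ⟨δ, hδ, hbound⟩ := exists_abs_pow_mul_iteratedDeriv_logProfile_le 3 hε
  have hA : 0 < R ^ 2 := by positivity
  set G := logProfile δ (R ^ 2)
  set B := R ^ 2 * Real.exp (1 / δ)
  have hG : ContDiff ℝ ∞ G := contDiff_logProfile hδ.le hA
  have hG' (t : ℝ) : deriv G t ∈ Icc 0 (1 / 2) := deriv_logProfile_mem_Icc hδ.le hA t
  have hderiv (k : ℕ) (hk : k < 3) (t : ℝ) :
      |t ^ (k + 1) * iteratedDeriv (k + 2) G t| ≤ ε := hbound _ hA k hk t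
  have hG₂ (x : E) : |‖x‖ ^ 2 * iteratedDeriv 2 G (‖x‖ ^ 2)| ≤ ε := by
    simpa only [zero_add, pow_one] using hderiv 0 three_pos (‖x‖ ^ 2)
  have hG'_abs (t : ℝ) : |deriv G t| ≤ 1 / 2 := (abs_of_nonneg (hG' t).1).trans_le (hG' t).2
  refine ⟨fun x ↦ G (‖x‖ ^ 2), √B, ?_, ⟨fun r ↦ G (r ^ 2), fun _ ↦ rfl⟩,
    hG.comp (contDiff_norm_sq ℝ), fun x hx ↦ ?_, ⟨G B, fun x hx ↦ ?_⟩, fun x ↦ ⟨?_, ?_⟩,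
    fun x v ↦ ?_, fun x ↦ ?_⟩
  · exact Real.lt_sqrt_of_sq_lt (lt_mul_of_one_lt_right hA (Real.one_lt_exp_iff.2 (by positivity)))
  · exact logProfile_of_le hδ.le hA (by positivity) (by gcongr)
  · exact logProfile_of_mul_exp_le hδ hA ((Real.sqrt_le_left (norm_nonneg x)).1 hx)
  · have hgrad := norm_gradient_comp_norm_sq_le (x := x) (hG.differentiable (by simp) _) (hG'_abs _)
    exact hgrad.trans (by gcongr; linarith [hdim])
  · have hlap := abs_laplacian_comp_norm_sq_le (contDiff_infty.1 hG 2) (hG'_abs _) (hG₂ x)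
    linarith [min_le_left 1 (c / K)]
  · have hhess := neg_le_fderiv_fderiv_comp_norm_sq (contDiff_infty.1 hG 2) (hG' _).1 (hG₂ x) v
    refine (neg_le_neg ?_).trans hhess
    gcongr
    nlinarith
  · rcases eq_or_ne x 0 with rfl | hx
    · rw [laplacian_laplacian_comp_norm_sq (contDiff_infty.1 hG 4)]
      simp [G, iteratedDeriv_two_logProfile_zero hδ.le hA]
    · refine (abs_laplacian_laplacian_comp_norm_sq_le (contDiff_infty.1 hG 4) hx
        fun k hk ↦ hderiv k hk _).trans ?_
      gcongr

end

/-- Construction of the virial weight on `ℝ⁶`: there is a universal constant `C > 0`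
such that for all `c, R > 0` there is a radial function `q` of class `C³` with locally
Lipschitz third derivatives, smooth off a finite set `S` of spheres centered at the
origin, with `q = |x|²/2` for `|x| ≤ R`, `q` constant for `|x| ≥ R̃`, `|∇q| ≤ C|x|`,
`|Δq| ≤ C`, `∇²q ≥ −c`, and `Δ²q ≤ c·|x|⁻²` off `S`. -/
theorem stmt7 :
    ∃ C > (0 : ℝ), ∀ c > (0 : ℝ), ∀ R > (0 : ℝ),
      ∃ (q : E6 → ℝ) (R' : ℝ) (S : Finset ℝ),
        R < R' ∧
        -- q is radial
        (∃ q₀ : ℝ → ℝ, ∀ x : E6, q x = q₀ ‖x‖) ∧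
        -- C³ regularity with locally Lipschitz third derivatives
        ContDiff ℝ 3 q ∧
        (∀ K : Set E6, IsCompact K →
          ∃ L : NNReal, LipschitzOnWith L (iteratedFDeriv ℝ 3 q) K) ∧
        -- smooth off the spheres of radii in S
        (∀ x : E6, ‖x‖ ∉ S → ContDiffAt ℝ (⊤ : ℕ∞) q x) ∧
        -- (P1)
        (∀ x : E6, ‖x‖ ≤ R → q x = ‖x‖ ^ 2 / 2) ∧
        -- (P2)
        (∃ k₀ : ℝ, ∀ x : E6, R' ≤ ‖x‖ → q x = k₀) ∧
        -- (P3)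
        (∀ x : E6, ‖gradient q x‖ ≤ C * ‖x‖ ∧ |lap6 q x| ≤ C) ∧
        -- (P4)
        (∀ (x v : E6),
          -(c * ‖v‖ ^ 2) ≤ ∑ i : Fin 6, ∑ j : Fin 6,
            fderiv ℝ (fun y => fderiv ℝ q y (EuclideanSpace.single j 1)) x
                (EuclideanSpace.single i 1) * v i * v j) ∧
        -- (P5)
        (∀ x : E6, ‖x‖ ∉ S → lap6 (lap6 q) x ≤ c / ‖x‖ ^ 2) := by
  obtain ⟨C, hC, h⟩ := stmt7_general E6
  refine ⟨C, hC, fun c hc R hR ↦ ?_⟩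
  obtain ⟨q, R', hRR', hradial, hq, hP1, hP2, hP3, hP4, hP5⟩ := h c hc R hR
  have hq₂ : ContDiff ℝ 2 q := contDiff_infty.1 hq 2
  have hlap : lap6 q = Laplacian.laplacian q := lap6_eq_laplacian hq₂
  have hlap₂ : lap6 (lap6 q) = Laplacian.laplacian (Laplacian.laplacian q) := by
    rw [hlap, lap6_eq_laplacian (contDiff_infty.1 (contDiff_laplacian hq) 2)]
  exact ⟨q, R', ∅, hRR', hradial, contDiff_infty.1 hq 3,
    fun K hK ↦ exists_lipschitzOnWith_iteratedFDeriv (contDiff_infty.1 hq 4) hK,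
    fun x _ ↦ hq.contDiffAt, hP1, hP2, hlap ▸ hP3,
    fun x v ↦ (hP4 x v).trans_eq (sum_sum_fderiv_fderiv_single hq₂ x v).symm,
    fun x _ ↦ hlap₂ ▸ (le_abs_self _).trans (hP5 x)⟩

end
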